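/- arXiv:2408.03051 — 3 statements merged into one kernel-verified Lean document; each statement's English description precedes it below -/
import Mathlib

section
/- Let $\alpha_1,\alpha_2>0$ and $H\in(0,2)$ with $H\neq 1$. Then, as $s\to 0^+$, $r_{12}(s)=C_0-\nu_1\nu_2\,\frac{\rho-\eta}{2}\,s^{H}+\Big(-\alpha_2\,C_0+\alpha_1^{1-H}\,\Gamma(H+1)\,\nu_1\nu_2\,\frac{\rho-\eta}{2}\Big)s+\frac{(\alpha_2-\alpha_1)\,\nu_1\nu_2}{H+1}\,\frac{\rho-\eta}{2}\,s^{1+H}+\Big(\frac{\alpha_2^{2}}{2}\,C_0-\frac{1}{2}\,\nu_1\nu_2\,\frac{\rho-\eta}{2}\,\Gamma(H+1)\big(\alpha_2\,\alpha_1^{1-H}-\alpha_1^{2-H}\big)\Big)s^{2}+o\big(s^{\max\{2,\,1+H\}}\big)$. -/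
open MeasureTheory Filter Asymptotics Topology Real

lemma aux_integrable (a p v : ℝ) (ha : 0 < a) (hv : 0 < v) :
    IntegrableOn (fun x : ℝ => Real.exp (-a * x) * x ^ p) (Set.Ioi v) := by
  apply integrable_of_isBigO_exp_neg (b := a / 2) (by positivity)
  · apply ContinuousOn.mul (by fun_prop)
    intro x hx
    exact (Real.continuousAt_rpow_const x p (Or.inl (lt_of_lt_of_le hv hx).ne')).continuousWithinAt
  · have h := (isLittleO_rpow_exp_pos_mul_atTop p (b := a / 2) (by positivity)).isBigO
    have h2 := (isBigO_refl (fun x : ℝ => Real.exp (-a * x)) atTop).mul h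
    refine h2.congr_right (fun x => ?_)
    rw [← Real.exp_add]; congr 1; ring

lemma aux_tendsto (a p : ℝ) (ha : 0 < a) :
    Tendsto (fun x : ℝ => Real.exp (-a * x) * x ^ p) atTop (𝓝 0) := by
  have h := (isLittleO_rpow_exp_pos_mul_atTop p ha).tendsto_div_nhds_zero
  refine h.congr (fun x => ?_)
  rw [neg_mul, Real.exp_neg]; field_simp

lemma aux_key (a H v : ℝ) (ha : 0 < a) (hH : 0 < H) (hv : 0 < v) :
    H * (H - 1) * ∫ u in Set.Iic (0:ℝ), Real.exp (a * u) * (v - u) ^ (H - 2) =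
      -H * v ^ (H - 1) - a * v ^ H + Real.exp (a * v) *
        (a ^ (1 - H) * Real.Gamma (H + 1) - a ^ 2 * ∫ x in (0:ℝ)..v, Real.exp (-a * x) * x ^ H) := by
  have h1 : ∫ u in Set.Iic (0:ℝ), Real.exp (a * u) * (v - u) ^ (H - 2) =
      Real.exp (a * v) * ∫ x in Set.Ioi v, Real.exp (-a * x) * x ^ (H - 2) := by
    have := (Measure.measurePreserving_sub_left (volume : Measure ℝ) v).setIntegral_preimage_emb
      (MeasurableEquiv.subLeft v).measurableEmbedding
      (fun x => Real.exp (a * v) * (Real.exp (-a * x) * x ^ (H - 2))) (Set.Ici v)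
    rw [← integral_const_mul, ← integral_Ici_eq_integral_Ioi, ← this]
    have hs : (fun t => v - t) ⁻¹' Set.Ici v = Set.Iic (0:ℝ) := by
      ext t; simp
    rw [hs]
    congr 1
    ext u
    rw [← mul_assoc, ← Real.exp_add]
    congr 2; ring
  have hi := fun p => aux_integrable a p v ha hv
  have h2 : ∫ x in Set.Ioi v, (H * (H - 1) * (Real.exp (-a * x) * x ^ (H - 2))
        - a ^ 2 * (Real.exp (-a * x) * x ^ H)) =
      0 - Real.exp (-a * v) * (H * v ^ (H - 1) + a * v ^ H) := by
    apply integral_Ioi_of_hasDerivAt_of_tendsto'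
      (f := fun x => Real.exp (-a * x) * (H * x ^ (H - 1) + a * x ^ H))
    · intro x hx
      have hx0 : x ≠ 0 := (lt_of_lt_of_le hv hx).ne'
      have e1 : HasDerivAt (fun x : ℝ => Real.exp (-a * x)) (Real.exp (-a * x) * (-a)) x := by
        simpa using ((hasDerivAt_id x).const_mul (-a)).exp
      have e2 := (Real.hasDerivAt_rpow_const (p := H - 1) (Or.inl hx0)).const_mul H
      have e3 := (Real.hasDerivAt_rpow_const (p := H) (Or.inl hx0)).const_mul a
      refine (e1.mul (e2.add e3)).congr_deriv ?_
      rw [show H - 1 - 1 = H - 2 by ring]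
      simp only [Pi.add_apply]
      ring
    · exact ((hi _).const_mul _).sub ((hi _).const_mul _)
    · have := ((aux_tendsto a (H-1) ha).const_mul H).add ((aux_tendsto a H ha).const_mul a)
      simp only [mul_zero, add_zero] at this
      refine this.congr (fun x => ?_)
      ring
  rw [integral_sub ((hi _).const_mul _) ((hi _).const_mul _), integral_const_mul,
    integral_const_mul] at h2
  have hi0 : IntegrableOn (fun x : ℝ => Real.exp (-a * x) * x ^ H) (Set.Ioi 0) := by
    have := integrableOn_rpow_mul_exp_neg_mul_rpow (p := 1) (s := H) (b := a)
      (by linarith) one_pos ha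
    simpa [mul_comm] using this
  have h3 := intervalIntegral.integral_interval_add_Ioi hi0 (hi H)
  have h4 : a ^ 2 * ∫ x in Set.Ioi (0:ℝ), Real.exp (-a * x) * x ^ H =
      a ^ (1 - H) * Real.Gamma (H + 1) := by
    have := Real.integral_rpow_mul_exp_neg_mul_Ioi (a := H + 1) (r := a) (by linarith) ha
    rw [show (fun x : ℝ => Real.exp (-a * x) * x ^ H) =
      fun t : ℝ => t ^ (H + 1 - 1) * Real.exp (-(a * t)) by
        ext t; rw [add_sub_cancel_right, neg_mul, mul_comm], this, ← mul_assoc]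
    congr 1
    rw [one_div, Real.inv_rpow ha.le, ← Real.rpow_neg ha.le, ← Real.rpow_natCast,
      ← Real.rpow_add ha]
    congr 1; push_cast; ring
  have hE : Real.exp (a * v) * Real.exp (-a * v) = 1 := by
    rw [← Real.exp_add]; simp
  rw [h1, ← h4, ← h3]
  linear_combination Real.exp (a * v) * h2 - (H * v ^ (H - 1) + a * v ^ H) * hE

lemma aux_mean (f f' : ℝ → ℝ) (q : ℝ) (hq : 0 ≤ q) (hf : Continuous f) (h0 : f 0 = 0)
    (hd : ∀ x > 0, HasDerivAt f (f' x) x)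
    (hO : f' =O[𝓝[>] (0:ℝ)] fun s => s ^ q) :
    f =O[𝓝[>] (0:ℝ)] fun s => s ^ (1 + q) := by
  obtain ⟨C, hC⟩ := hO.bound
  rw [eventually_nhdsWithin_iff, Metric.eventually_nhds_iff] at hC
  obtain ⟨e, he, hC⟩ := hC
  refine IsBigO.of_bound C ?_
  rw [eventually_nhdsWithin_iff, Metric.eventually_nhds_iff]
  refine ⟨e, he, fun s hs hs0 => ?_⟩
  have hs0 : 0 < s := hs0
  obtain ⟨c, hc, hce⟩ := exists_hasDerivAt_eq_slope f f' hs0 hf.continuousOn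
    (fun x hx => hd x hx.1)
  have hc1 : dist c 0 < e := by
    rw [Real.dist_eq, sub_zero, abs_of_pos hc.1]
    rw [Real.dist_eq, sub_zero, abs_of_pos hs0] at hs
    exact hc.2.trans hs
  have hb := hC hc1 hc.1
  have hcq : 0 < c ^ q := Real.rpow_pos_of_pos hc.1 q
  rw [Real.norm_of_nonneg hcq.le] at hb
  have hCn : 0 ≤ C := by
    by_contra hneg
    have := norm_nonneg (f' c)
    nlinarith
  have hcs : c ^ q ≤ s ^ q := Real.rpow_le_rpow hc.1.le hc.2.le hq
  have hfs : f s = f' c * s := by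
    rw [hce, h0, sub_zero, sub_zero, div_mul_cancel₀ _ hs0.ne']
  rw [hfs, norm_mul, Real.norm_of_nonneg hs0.le, Real.norm_of_nonneg (Real.rpow_nonneg hs0.le _),
    Real.rpow_add hs0, Real.rpow_one]
  calc ‖f' c‖ * s ≤ (C * c ^ q) * s := by gcongr
    _ ≤ (C * s ^ q) * s := by gcongr
    _ = _ := by ring

lemma aux_pow (p q : ℝ) (h : q ≤ p) :
    (fun s : ℝ => s ^ p) =O[𝓝[>] (0:ℝ)] fun s => s ^ q := by
  refine IsBigO.of_bound 1 ?_
  filter_upwards [Ioo_mem_nhdsGT (zero_lt_one (α := ℝ))] with s hs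
  rw [Real.norm_of_nonneg (Real.rpow_nonneg hs.1.le _),
    Real.norm_of_nonneg (Real.rpow_nonneg hs.1.le _), one_mul]
  exact Real.rpow_le_rpow_of_exponent_ge hs.1 hs.2.le h

lemma aux_pow_o (p q : ℝ) (h : q < p) :
    (fun s : ℝ => s ^ p) =o[𝓝[>] (0:ℝ)] fun s => s ^ q := by
  have h1 : Tendsto (fun s : ℝ => s ^ (p - q)) (𝓝[>] 0) (𝓝 0) := by
    have := (Real.continuousAt_rpow_const 0 (p - q) (Or.inr (by linarith))).tendsto
    rw [Real.zero_rpow (by linarith)] at this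
    exact this.mono_left nhdsWithin_le_nhds
  have h2 := (isBigO_refl (fun s : ℝ => s ^ q) (𝓝[>] (0:ℝ))).mul_isLittleO
    ((isLittleO_one_iff ℝ).2 h1)
  refine h2.congr' ?_ ?_
  · filter_upwards [self_mem_nhdsWithin] with s hs
    rw [← Real.rpow_add hs]; congr 1; ring
  · simp only [mul_one]; rfl

lemma aux_exp (c : ℝ) (n : ℕ) :
    (fun s : ℝ => Real.exp (c * s) - ∑ i ∈ Finset.range n, (c * s) ^ i / i.factorial)
      =O[𝓝[>] (0:ℝ)] fun s => s ^ (n:ℝ) := by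
  have ht : Tendsto (fun s : ℝ => c * s) (𝓝[>] 0) (𝓝 0) := by
    have : Continuous fun s : ℝ => c * s := by fun_prop
    simpa using (this.tendsto 0).mono_left nhdsWithin_le_nhds
  have h := (Real.exp_sub_sum_range_isBigO_pow n).comp_tendsto ht
  refine h.trans ?_
  refine IsBigO.of_bound (|c| ^ n) (Eventually.of_forall fun s => ?_)
  simp [Real.rpow_natCast, mul_pow]

lemma aux_bdd (f : ℝ → ℝ) (hf : Continuous f) :
    f =O[𝓝[>] (0:ℝ)] fun _ => (1:ℝ) :=
  ((hf.tendsto 0).mono_left nhdsWithin_le_nhds).isBigO_one ℝ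

lemma aux_main (a b H A : ℝ) (hH : 0 < H) (q : ℝ) (hq0 : 0 ≤ q) (hq2 : q ≤ 2) (hq1 : q ≤ 1 + H)
    (K : ℝ → ℝ)
    (hK : ∀ v, K v = -H * v ^ (H - 1) - a * v ^ H + Real.exp (a * v) *
        (A - a ^ 2 * ∫ x in (0:ℝ)..v, Real.exp (-a * x) * x ^ H)) :
    (fun s : ℝ => (∫ v in (0:ℝ)..s, Real.exp (b * v) * K v) - Real.exp (b * s) *
      (-s ^ H + A * s + (b - a) / (H + 1) * s ^ (1 + H) - 1 / 2 * A * (b - a) * s ^ 2))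
      =O[𝓝[>] (0:ℝ)] fun s => s ^ (1 + q) := by
  have hc : Continuous fun x : ℝ => Real.exp (-a * x) * x ^ H :=
    (by fun_prop : Continuous fun x : ℝ => Real.exp (-a * x)).mul
      (Real.continuous_rpow_const hH.le)
  set L : ℝ → ℝ := fun v => ∫ x in (0:ℝ)..v, Real.exp (-a * x) * x ^ H with hL
  have hLd : ∀ v, HasDerivAt L (Real.exp (-a * v) * v ^ H) v := fun v =>
    intervalIntegral.integral_hasDerivAt_right (hc.intervalIntegrable _ _)
      hc.stronglyMeasurable.stronglyMeasurableAtFilter hc.continuousAt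
  have hLc : Continuous L := continuous_iff_continuousAt.2 fun v => (hLd v).continuousAt
  have hL0 : L 0 = 0 := by simp [hL]
  have hLO : L =O[𝓝[>] (0:ℝ)] fun s => s ^ (1 + H) := by
    refine aux_mean L _ H hH.le hLc hL0 (fun x _ => hLd x) ?_
    have := (aux_bdd (fun x : ℝ => Real.exp (-a * x)) (by fun_prop)).mul
      (isBigO_refl (fun s : ℝ => s ^ H) (𝓝[>] (0:ℝ)))
    simpa using this
  have hKe : K = fun v => -H * v ^ (H - 1) - a * v ^ H + Real.exp (a * v) * (A - a ^ 2 * L v) :=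
    funext hK
  have hrc : Continuous fun x : ℝ => x ^ H := Real.continuous_rpow_const hH.le
  have hKi : ∀ x y, IntervalIntegrable (fun v => Real.exp (b * v) * K v) volume x y := by
    intro x y
    have hb : Continuous fun v : ℝ => Real.exp (b * v) := by fun_prop
    refine IntervalIntegrable.continuousOn_mul ?_ hb.continuousOn
    rw [hKe]
    refine ((((intervalIntegral.intervalIntegrable_rpow' (by linarith)).const_mul _).sub
      ((hrc.const_mul a).intervalIntegrable _ _)).add ?_)
    apply Continuous.intervalIntegrable
    fun_prop
  have hKm : StronglyMeasurable (fun v => Real.exp (b * v) * K v) := by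
    apply Measurable.stronglyMeasurable
    rw [hKe]
    have := hLc.measurable
    fun_prop
  have hKc : ∀ v > 0, ContinuousAt (fun v => Real.exp (b * v) * K v) v := by
    intro v hv
    rw [hKe]
    have h1 : ContinuousAt (fun x : ℝ => x ^ (H - 1)) v :=
      Real.continuousAt_rpow_const v _ (Or.inl hv.ne')
    have h2 := hrc.continuousAt (x := v)
    have h3 := hLc.continuousAt (x := v)
    have h4 : ContinuousAt (fun v : ℝ => Real.exp (a * v)) v := by fun_prop
    have h5 : ContinuousAt (fun v : ℝ => Real.exp (b * v)) v := by fun_prop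
    exact h5.mul (((h1.const_mul _).sub (h2.const_mul _)).add
      (h4.mul (continuousAt_const.sub (h3.const_mul _))))
  refine aux_mean _ (fun s => Real.exp (b * s) * (A * (Real.exp (a * s) - 1 - a * s)
      - a ^ 2 * (Real.exp (a * s) * L s) - b * (b - a) / (H + 1) * s ^ (1 + H)
      + 1 / 2 * b * A * (b - a) * s ^ (2:ℝ))) q hq0 ?_ ?_ ?_ ?_
  · refine (intervalIntegral.continuous_primitive hKi 0).sub ?_
    have := Real.continuous_rpow_const (q := 1 + H) (by linarith)
    fun_prop
  · simp [Real.zero_rpow hH.ne', Real.zero_rpow (show 1 + H ≠ 0 by linarith)]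
  · intro s hs
    have d1 := intervalIntegral.integral_hasDerivAt_right (hKi 0 s)
      hKm.stronglyMeasurableAtFilter (hKc s hs)
    have e1 : HasDerivAt (fun x : ℝ => Real.exp (b * x)) (Real.exp (b * s) * b) s := by
      simpa using ((hasDerivAt_id s).const_mul b).exp
    have e2 := (Real.hasDerivAt_rpow_const (p := H) (Or.inl hs.ne')).neg
    have e3 := (hasDerivAt_id s).const_mul A
    have e4 := (Real.hasDerivAt_rpow_const (p := 1 + H) (Or.inl hs.ne')).const_mul ((b - a) / (H + 1))
    have e5 := (hasDerivAt_pow 2 s).const_mul (1 / 2 * A * (b - a))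
    refine (d1.sub (e1.mul (((e2.add e3).add e4).sub e5))).congr_deriv ?_
    rw [hKe]
    have hH1 : H + 1 ≠ 0 := by linarith
    simp only [Pi.add_apply, Pi.sub_apply, Pi.neg_apply, id, add_sub_cancel_left, Real.rpow_two]
    field_simp
    ring
  · have hexp := aux_exp a 2
    have t1 : (fun s : ℝ => A * (Real.exp (a * s) - 1 - a * s)) =O[𝓝[>] (0:ℝ)] fun s => s ^ q := by
      refine ((hexp.congr_left fun s => ?_).trans (aux_pow _ _ (by simpa using hq2))).const_mul_left A
      simp [Finset.sum_range_succ]; ring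
    have t2 : (fun s : ℝ => a ^ 2 * (Real.exp (a * s) * L s)) =O[𝓝[>] (0:ℝ)] fun s => s ^ q := by
      have := (aux_bdd (fun x : ℝ => Real.exp (a * x)) (by fun_prop)).mul
        (hLO.trans (aux_pow _ _ hq1))
      simp only [one_mul] at this
      exact this.const_mul_left _
    have t3 := (aux_pow _ _ hq1).const_mul_left (b * (b - a) / (H + 1))
    have t4 := (aux_pow _ _ hq2).const_mul_left (1 / 2 * b * A * (b - a))
    have := (aux_bdd (fun x : ℝ => Real.exp (b * x)) (by fun_prop)).mul
      (((t1.sub t2).sub t3).add t4)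
    simpa only [one_mul] using this

/-- Short-time expansion of the lagged cross-covariance `r₁₂` of the bivariate
fractional Ornstein–Uhlenbeck process, for `H = H₁ + H₂ ≠ 1` (Lemma 2.5). -/
theorem stmt4
    (α1 α2 ν1 ν2 H ρ η : ℝ)
    (hα1 : 0 < α1) (hα2 : 0 < α2) (hν1 : 0 < ν1) (hν2 : 0 < ν2)
    (hH : H ∈ Set.Ioo (0:ℝ) 2) (hH1 : H ≠ 1)
    (C0 : ℝ)
    (hC0 : C0 = Real.Gamma (H + 1) * ν1 * ν2 / (2 * (α1 + α2)) *
      ((α1 ^ (1 - H) + α2 ^ (1 - H)) * ρ + (α2 ^ (1 - H) - α1 ^ (1 - H)) * η))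
    (I12 : ℝ → ℝ)
    (hI12 : ∀ s, I12 s =
      ∫ v in (0:ℝ)..s, Real.exp (α2 * v) *
        ∫ u in Set.Iic (0:ℝ), Real.exp (α1 * u) * (v - u) ^ (H - 2))
    (r12 : ℝ → ℝ)
    (hr12 : ∀ s, r12 s = Real.exp (-α2 * s) * C0 +
      ν1 * ν2 * Real.exp (-α2 * s) * (H * (H - 1)) * ((ρ - η) / 2) * I12 s) :
    (fun s : ℝ => r12 s -
        (C0 - ν1 * ν2 * ((ρ - η) / 2) * s ^ H +
          (-α2 * C0 + α1 ^ (1 - H) * Real.Gamma (H + 1) * ν1 * ν2 * ((ρ - η) / 2)) * s +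
          (α2 - α1) * ν1 * ν2 / (H + 1) * ((ρ - η) / 2) * s ^ (1 + H) +
          (α2 ^ 2 / 2 * C0 -
            1 / 2 * ν1 * ν2 * ((ρ - η) / 2) * Real.Gamma (H + 1) *
              (α2 * α1 ^ (1 - H) - α1 ^ (2 - H))) * s ^ (2 : ℕ)))
      =o[𝓝[>] (0:ℝ)] fun s : ℝ => s ^ max 2 (1 + H) := by
  obtain ⟨hH0, hH2⟩ := hH
  set A := α1 ^ (1 - H) * Real.Gamma (H + 1) with hA
  obtain ⟨q, hq0, hq2, hq1, hqm⟩ : ∃ q : ℝ, 0 ≤ q ∧ q ≤ 2 ∧ q ≤ 1 + H ∧ max 2 (1 + H) < 1 + q := by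
    refine ⟨min 2 (1 + H), le_min (by norm_num) (by linarith), min_le_left _ _, min_le_right _ _, ?_⟩
    rcases lt_or_gt_of_ne hH1 with h | h
    · rw [max_eq_left (by linarith), min_eq_right (by linarith)]; linarith
    · rw [max_eq_right (by linarith), min_eq_left (by linarith)]; linarith
  have hm := aux_main α1 α2 H A hH0 q hq0 hq2 hq1 _ (fun _ => rfl)
  have hexp := (aux_exp (-α2) 3).trans (aux_pow _ (1 + q) (by push_cast; linarith))
  have h2 := (aux_bdd (fun x : ℝ => Real.exp (-α2 * x)) (by fun_prop)).mul hm
  simp only [one_mul] at h2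
  have h3 := (hexp.const_mul_left C0).add (h2.const_mul_left (ν1 * ν2 * ((ρ - η) / 2)))
  refine IsLittleO.congr' (h3.trans_isLittleO (aux_pow_o _ _ hqm)) ?_ (EventuallyEq.refl _ _)
  filter_upwards [self_mem_nhdsWithin] with s hs
  have hs : 0 < s := hs
  have hF : H * (H - 1) * I12 s = ∫ v in (0:ℝ)..s, Real.exp (α2 * v) *
      (-H * v ^ (H - 1) - α1 * v ^ H + Real.exp (α1 * v) *
        (A - α1 ^ 2 * ∫ x in (0:ℝ)..v, Real.exp (-α1 * x) * x ^ H)) := by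
    rw [hI12, ← intervalIntegral.integral_const_mul]
    apply intervalIntegral.integral_congr_ae
    refine Eventually.of_forall fun v hv => ?_
    rw [Set.uIoc_of_le hs.le] at hv
    rw [← aux_key α1 H v hα1 hH0 hv.1]
    ring
  rw [← hF, hr12]
  have hE : Real.exp (-α2 * s) * Real.exp (α2 * s) = 1 := by
    rw [← Real.exp_add]; simp
  have hA2 : α1 ^ (2 - H) = α1 * α1 ^ (1 - H) := by
    rw [show 2 - H = 1 + (1 - H) by ring, Real.rpow_add hα1, Real.rpow_one]
  rw [hA2]
  simp only [Finset.sum_range_succ, Finset.sum_range_zero, Nat.factorial]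
  push_cast
  linear_combination (-(ν1 * ν2 * ((ρ - η) / 2)) * (-s ^ H + A * s + (α2 - α1) / (H + 1) * s ^ (1 + H) - 1 / 2 * A * (α2 - α1) * s ^ 2)) * hE
end

section
/- Let $\alpha_1,\alpha_2>0$ and $C_0,c\in\mathbb{R}$. Define $r(s)=e^{-\alpha_2 s}\Big(C_0+c\,\int_0^s e^{\alpha_2 v}\big(\int_{-\infty}^0 e^{\alpha_1 u}(v-u)^{-1}\,du\big)dv\Big)$ for $s\ge 0$. Then, as $s\to 0^+$, $r(s)=C_0-c\,s\log s+O(s)$. -/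
open MeasureTheory Filter Asymptotics Topology Real

lemma aux_g (a : ℝ) (ha : 0 < a) : ∃ K : ℝ, 0 ≤ K ∧ ∀ v : ℝ, 0 < v → v ≤ 1 →
    |(∫ u in Set.Iic (0:ℝ), Real.exp (a * u) * (v - u)⁻¹) + Real.log v| ≤ K := by
  have hI : IntegrableOn (fun u : ℝ => Real.exp (a * u)) (Set.Iic (-1)) :=
    integrableOn_exp_mul_Iic ha _
  set K1 := ∫ u in Set.Iic (-1:ℝ), Real.exp (a * u) with hK1
  have hK1p : 0 ≤ K1 := integral_nonneg fun u => (Real.exp_pos _).le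
  refine ⟨K1 + a + 1, by positivity, fun v hv hv1 => ?_⟩
  have hb : ∀ᵐ u ∂(volume.restrict (Set.Iic (-1:ℝ))),
      ‖Real.exp (a * u) * (v - u)⁻¹‖ ≤ Real.exp (a * u) := by
    refine (ae_restrict_iff' measurableSet_Iic).2 (Eventually.of_forall fun u hu => ?_)
    have hu' : u ≤ -1 := hu
    have h1 : 1 ≤ v - u := by linarith
    have h2 : (v - u)⁻¹ ≤ 1 := inv_le_one_of_one_le₀ h1
    have h3 : 0 ≤ (v - u)⁻¹ := by positivity
    rw [Real.norm_eq_abs, abs_of_nonneg (by positivity)]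
    exact mul_le_of_le_one_right (Real.exp_pos _).le h2
  have hA : IntegrableOn (fun u : ℝ => Real.exp (a * u) * (v - u)⁻¹) (Set.Iic (-1)) := by
    refine Integrable.mono' hI ?_ hb
    exact Measurable.aestronglyMeasurable (by fun_prop)
  have hA' : |∫ u in Set.Iic (-1:ℝ), Real.exp (a * u) * (v - u)⁻¹| ≤ K1 :=
    norm_integral_le_of_norm_le hI hb
  have hne : ∀ u ∈ Set.uIcc (-1:ℝ) 0, v - u ≠ 0 := by
    intro u hu
    rw [Set.uIcc_of_le (by norm_num)] at hu
    have := hu.2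
    intro h; linarith
  have hc : ContinuousOn (fun u : ℝ => (v - u)⁻¹) (Set.uIcc (-1:ℝ) 0) :=
    ContinuousOn.inv₀ (by fun_prop) hne
  have hi1 : IntervalIntegrable (fun u : ℝ => (v - u)⁻¹) volume (-1) 0 := hc.intervalIntegrable
  have hi2 : IntervalIntegrable (fun u : ℝ => Real.exp (a * u) * (v - u)⁻¹) volume (-1) 0 :=
    ContinuousOn.intervalIntegrable (ContinuousOn.mul (by fun_prop) hc)
  have hsplit : (∫ u in Set.Iic (0:ℝ), Real.exp (a * u) * (v - u)⁻¹) =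
      (∫ u in Set.Iic (-1:ℝ), Real.exp (a * u) * (v - u)⁻¹) +
      ∫ u in (-1:ℝ)..0, Real.exp (a * u) * (v - u)⁻¹ := by
    rw [intervalIntegral.integral_of_le (by norm_num), ← setIntegral_union
      (Set.Iic_disjoint_Ioc le_rfl) measurableSet_Ioc hA
      ((intervalIntegrable_iff_integrableOn_Ioc_of_le (by norm_num)).1 hi2),
      Set.Iic_union_Ioc_eq_Iic (by norm_num)]
  have hlog : (∫ u in (-1:ℝ)..0, (v - u)⁻¹) = Real.log (v + 1) - Real.log v := by
    rw [intervalIntegral.integral_comp_sub_left (fun x => x⁻¹) v]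
    simp only [sub_zero, sub_neg_eq_add]
    rw [integral_inv_of_pos hv (by linarith), Real.log_div (by linarith) hv.ne']
  have hD : |∫ u in (-1:ℝ)..0, (Real.exp (a * u) * (v - u)⁻¹ - (v - u)⁻¹)| ≤ a := by
    have := intervalIntegral.norm_integral_le_of_norm_le_const (a := (-1:ℝ)) (b := 0) (C := a)
      (f := fun u : ℝ => Real.exp (a * u) * (v - u)⁻¹ - (v - u)⁻¹) ?_
    · simpa using this
    · intro u hu
      rw [Set.uIoc_of_le (by norm_num)] at hu
      have hp : 0 < v - u := by linarith [hu.2]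
      have e1 : Real.exp (a * u) ≤ 1 := by
        rw [Real.exp_le_one_iff]; nlinarith [hu.2]
      have e2 := Real.add_one_le_exp (a * u)
      rw [show Real.exp (a * u) * (v - u)⁻¹ - (v - u)⁻¹ = -((1 - Real.exp (a * u)) / (v - u)) by
        field_simp; ring, norm_neg, Real.norm_eq_abs,
        abs_of_nonneg (div_nonneg (by linarith) hp.le), div_le_iff₀ hp]
      nlinarith
  rw [intervalIntegral.integral_sub hi2 hi1, hlog] at hD
  rw [hsplit]
  have l1 : 0 ≤ Real.log (v + 1) := Real.log_nonneg (by linarith)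
  have l2 : Real.log (v + 1) ≤ 1 := by linarith [Real.log_le_sub_one_of_pos (show 0 < v + 1 by linarith)]
  rw [abs_le] at *
  constructor <;> linarith [hD.1, hD.2, hA'.1, hA'.2]

lemma aux_mlog (v : ℝ) (hv : 0 < v) (hv1 : v ≤ 1) : |v * Real.log v| ≤ 1 := by
  have := Real.abs_log_mul_self_lt v hv hv1
  rw [mul_comm]; exact this.le

lemma aux_F (a b : ℝ) (ha : 0 < a) (hb : 0 < b) : ∃ M : ℝ, 0 ≤ M ∧ ∀ v : ℝ, 0 < v → v ≤ 1 →
    |Real.exp (b * v) * (∫ u in Set.Iic (0:ℝ), Real.exp (a * u) * (v - u)⁻¹) + Real.log v| ≤ M := by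
  obtain ⟨K, hK, h⟩ := aux_g a ha
  refine ⟨Real.exp b * K + b * Real.exp b, by positivity, fun v hv hv1 => ?_⟩
  have h1 := h v hv hv1
  set g := ∫ u in Set.Iic (0:ℝ), Real.exp (a * u) * (v - u)⁻¹
  have h2 := aux_mlog v hv hv1
  have e1 : Real.exp (b * v) ≤ Real.exp b := Real.exp_le_exp.2 (by nlinarith)
  have e0 : 1 ≤ Real.exp (b * v) := Real.one_le_exp (by positivity)
  have e2 : Real.exp (b * v) - 1 ≤ b * Real.exp b * v := by
    have := Real.add_one_le_exp (-(b * v))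
    rw [Real.exp_neg] at this
    have h3 : (1 - b * v) * Real.exp (b * v) ≤ 1 := by
      rw [← le_div_iff₀ (Real.exp_pos _), one_div]; linarith
    have : b * v * Real.exp (b * v) ≤ b * v * Real.exp b := by gcongr
    linarith
  have e3 : |(Real.exp (b * v) - 1) * Real.log v| ≤ b * Real.exp b := by
    rw [abs_mul, abs_of_nonneg (by linarith : 0 ≤ Real.exp (b * v) - 1)]
    calc _ ≤ b * Real.exp b * v * |Real.log v| := by gcongr
      _ = b * Real.exp b * |v * Real.log v| := by rw [abs_mul, abs_of_pos hv]; ring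
      _ ≤ b * Real.exp b * 1 := by gcongr
      _ = _ := by ring
  have e4 : |Real.exp (b * v) * (g + Real.log v)| ≤ Real.exp b * K := by
    rw [abs_mul, abs_of_pos (Real.exp_pos _)]; gcongr
  rw [show Real.exp (b * v) * g + Real.log v =
    Real.exp (b * v) * (g + Real.log v) - (Real.exp (b * v) - 1) * Real.log v by ring]
  exact (abs_sub _ _).trans (add_le_add e4 e3)

lemma aux_I (a b : ℝ) (ha : 0 < a) (hb : 0 < b) : ∃ M : ℝ, 0 ≤ M ∧ ∀ s : ℝ, 0 < s → s ≤ 1 →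
    |(∫ v in (0:ℝ)..s, Real.exp (b * v) *
      ∫ u in Set.Iic (0:ℝ), Real.exp (a * u) * (v - u)⁻¹) + s * Real.log s| ≤ M * s := by
  obtain ⟨M, hM, h⟩ := aux_F a b ha hb
  refine ⟨M + 1, by positivity, fun s hs hs1 => ?_⟩
  have hm : StronglyMeasurable (fun v : ℝ => Real.exp (b * v) *
      ∫ u in Set.Iic (0:ℝ), Real.exp (a * u) * (v - u)⁻¹) := by
    refine StronglyMeasurable.mul (Measurable.stronglyMeasurable (by fun_prop)) ?_
    refine StronglyMeasurable.integral_prod_right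
      (f := fun v u : ℝ => Real.exp (a * u) * (v - u)⁻¹) ?_
    exact Measurable.stronglyMeasurable (by unfold Function.uncurry; fun_prop)
  set F := fun v : ℝ => Real.exp (b * v) *
      ∫ u in Set.Iic (0:ℝ), Real.exp (a * u) * (v - u)⁻¹ with hF
  have hlogi : IntervalIntegrable Real.log volume 0 s := intervalIntegral.intervalIntegrable_log'
  have hbd : ∀ v ∈ Set.uIoc 0 s, ‖F v + Real.log v‖ ≤ M := by
    intro v hv
    rw [Set.uIoc_of_le hs.le] at hv
    exact h v hv.1 (hv.2.trans hs1)
  have hsum : IntervalIntegrable (fun v => F v + Real.log v) volume 0 s := by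
    refine IntervalIntegrable.mono_fun' (g := fun _ => M) intervalIntegrable_const ?_ ?_
    · exact (hm.add Real.measurable_log.stronglyMeasurable).aestronglyMeasurable
    · exact (ae_restrict_iff' measurableSet_uIoc).2 (Eventually.of_forall hbd)
  have hFi : IntervalIntegrable F volume 0 s := by
    have := hsum.sub hlogi
    simpa using this
  have h1 := intervalIntegral.norm_integral_le_of_norm_le_const hbd
  rw [intervalIntegral.integral_add hFi hlogi, integral_log, sub_zero, abs_of_pos hs,
    Real.norm_eq_abs] at h1
  simp only [zero_mul, sub_zero, add_zero] at h1
  rw [abs_le] at *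
  constructor <;> linarith [h1.1, h1.2]

/-- Short-time expansion of the cross-covariance of the bivariate fractional
Ornstein–Uhlenbeck process in the boundary case `H = H₁ + H₂ = 1`:
`r(s) = C₀ - c s log s + O(s)` as `s → 0⁺`. -/
theorem stmt5
    (α1 α2 C0 c : ℝ) (hα1 : 0 < α1) (hα2 : 0 < α2)
    (r : ℝ → ℝ)
    (hr : ∀ s, r s = Real.exp (-α2 * s) *
      (C0 + c * ∫ v in (0:ℝ)..s, Real.exp (α2 * v) *
        ∫ u in Set.Iic (0:ℝ), Real.exp (α1 * u) * (v - u)⁻¹)) :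
    (fun s : ℝ => r s - (C0 - c * s * Real.log s)) =O[𝓝[>] (0:ℝ)] fun s : ℝ => s := by
  obtain ⟨M, hM, h⟩ := aux_I α1 α2 hα1 hα2
  refine IsBigO.of_bound (α2 * |C0| + |c| * M + |c| * α2) ?_
  filter_upwards [Ioc_mem_nhdsGT (zero_lt_one' ℝ)] with s hs
  obtain ⟨hs0, hs1⟩ := hs
  have h1 := h s hs0 hs1
  have h2 := aux_mlog s hs0 hs1
  rw [hr]
  set I := ∫ v in (0:ℝ)..s, Real.exp (α2 * v) *
        ∫ u in Set.Iic (0:ℝ), Real.exp (α1 * u) * (v - u)⁻¹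
  have e1 : Real.exp (-α2 * s) ≤ 1 := by
    rw [Real.exp_le_one_iff]; nlinarith
  have e2 : |1 - Real.exp (-α2 * s)| ≤ α2 * s := by
    rw [abs_of_nonneg (by linarith)]
    linarith [Real.add_one_le_exp (-α2 * s)]
  have e3 : |Real.exp (-α2 * s)| ≤ 1 := by rw [abs_of_pos (Real.exp_pos _)]; exact e1
  set E := Real.exp (-α2 * s)
  rw [Real.norm_eq_abs, Real.norm_eq_abs, abs_of_pos hs0,
    show E * (C0 + c * I) - (C0 - c * s * Real.log s) =
      -((1 - E) * C0) + c * (E * (I + s * Real.log s)) + c * ((1 - E) * (s * Real.log s)) by ring]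
  refine (abs_add_three _ _ _).trans ?_
  rw [abs_neg]
  simp only [abs_mul _ C0, abs_mul c, abs_mul E, abs_mul (1 - E)]
  have t1 : |1 - E| * |C0| ≤ α2 * s * |C0| := by gcongr
  have t2 : |c| * (|E| * |I + s * Real.log s|) ≤ |c| * (1 * (M * s)) := by gcongr
  have t3 : |c| * (|1 - E| * |s * Real.log s|) ≤ |c| * (α2 * s * 1) := by gcongr
  linarith
end

section
/- Let $\alpha_1,\alpha_2>0$ and $H\in(0,1)$. Then, as $s\to 0^+$, $\frac{r_{12}(s)-r_{21}(s)}{\nu_1\nu_2\,s^{H}}=\eta+O\big(s^{1-H}\big)$. -/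
open MeasureTheory Filter Asymptotics Topology Real

lemma aux_J (a H : ℝ) (ha : 0 < a) (hH : H ∈ Set.Ioo (0:ℝ) 1) :
    ∃ K : ℝ, 0 ≤ K ∧ ∀ v : ℝ, 0 < v →
      |(∫ u in Set.Iic (0:ℝ), Real.exp (a * u) * (v - u) ^ (H - 2)) - v ^ (H - 1) / (1 - H)| ≤ K := by
  obtain ⟨h0, h1⟩ := hH
  have hG : IntegrableOn (fun t : ℝ => t ^ (H - 1) * Real.exp (-a * t)) (Set.Ioi 0) :=
    (integrableOn_rpow_mul_exp_neg_mul_rpow (p := 1) (s := H - 1) (by linarith)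
      one_pos ha).congr_fun
      (fun t _ => by simp) measurableSet_Ioi
  have hE : IntegrableOn (fun t : ℝ => Real.exp (-a * t)) (Set.Ioi 0) :=
    exp_neg_integrableOn_Ioi 0 ha
  set G := ∫ t in Set.Ioi (0:ℝ), t ^ (H - 1) * Real.exp (-a * t) with hGdef
  have hG0 : 0 ≤ G := setIntegral_nonneg measurableSet_Ioi (fun t ht => by
    have : 0 < t := ht
    positivity)
  have h1H : 0 < 1 - H := by linarith
  refine ⟨a / (1 - H) * G, by positivity, fun v hv => ?_⟩
  have hsub : (∫ u in Set.Iic (0:ℝ), Real.exp (a * u) * (v - u) ^ (H - 2))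
      = ∫ t in Set.Ioi (0:ℝ), Real.exp (-a * t) * (v + t) ^ (H - 2) := by
    have := integral_comp_neg_Iic (0:ℝ) (fun t => Real.exp (-a * t) * (v + t) ^ (H - 2))
    rw [neg_zero] at this
    rw [← this]
    refine integral_congr_ae (Eventually.of_forall fun u => ?_)
    simp [sub_eq_add_neg]
  have hint : ∀ p : ℝ, p ≤ 0 →
      IntegrableOn (fun t : ℝ => Real.exp (-a * t) * (v + t) ^ p) (Set.Ioi 0) := by
    intro p hp
    refine Integrable.mono' (hE.mul_const (v ^ p)) ?_ ?_
    · exact (by fun_prop : Measurable fun t : ℝ => Real.exp (-a * t) * (v + t) ^ p).aestronglyMeasurable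
    · refine (ae_restrict_iff' measurableSet_Ioi).2 (Eventually.of_forall fun t ht => ?_)
      have ht : 0 < t := ht
      have : (v + t) ^ p ≤ v ^ p := rpow_le_rpow_of_nonpos hv (by linarith) hp
      rw [norm_eq_abs, abs_of_nonneg (by positivity)]
      gcongr
  have hA := hint (H - 1) (by linarith)
  have hB := hint (H - 2) (by linarith)
  have hFTC := integral_Ioi_of_hasDerivAt_of_tendsto'
    (f := fun t : ℝ => Real.exp (-a * t) * (v + t) ^ (H - 1))
    (f' := fun t : ℝ => -a * (Real.exp (-a * t) * (v + t) ^ (H - 1)) +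
      (H - 1) * (Real.exp (-a * t) * (v + t) ^ (H - 2))) (a := 0) (m := 0)
    (fun t ht => by
      have ht : 0 ≤ t := ht
      have e1 : HasDerivAt (fun t : ℝ => Real.exp (-a * t)) (Real.exp (-a * t) * (-a * 1)) t :=
        ((hasDerivAt_id t).const_mul (-a)).exp
      have e2 : HasDerivAt (fun t : ℝ => (v + t) ^ (H - 1)) (1 * (H - 1) * (v + t) ^ (H - 1 - 1)) t :=
        ((hasDerivAt_id t).const_add v).rpow_const (Or.inl (by simp; linarith))
      refine (e1.mul e2).congr_deriv ?_
      rw [show H - 1 - 1 = H - 2 by ring]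
      ring)
    ((hA.const_mul (-a)).add (hB.const_mul (H - 1)))
    (by
      have l1 : Tendsto (fun t : ℝ => Real.exp (-a * t)) atTop (𝓝 0) := by
        refine tendsto_exp_atBot.comp ?_
        exact tendsto_id.const_mul_atTop_of_neg (by linarith)
      have l2 : Tendsto (fun t : ℝ => Real.exp (-a * t) * v ^ (H - 1)) atTop (𝓝 0) := by
        simpa using l1.mul_const (v ^ (H - 1))
      refine squeeze_zero' ?_ ?_ l2
      · filter_upwards [eventually_ge_atTop 0] with t ht
        positivity
      · filter_upwards [eventually_ge_atTop 0] with t ht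
        have : (v + t) ^ (H - 1) ≤ v ^ (H - 1) :=
          rpow_le_rpow_of_nonpos hv (by linarith) (by linarith)
        gcongr)
  rw [integral_add (hA.const_mul (-a)) (hB.const_mul (H - 1)), integral_const_mul,
    integral_const_mul] at hFTC
  simp only [mul_zero, Real.exp_zero, add_zero, one_mul, zero_sub] at hFTC
  rw [hsub]
  have hle : (∫ t in Set.Ioi (0:ℝ), Real.exp (-a * t) * (v + t) ^ (H - 1)) ≤ G := by
    refine setIntegral_mono_on hA hG measurableSet_Ioi fun t ht => ?_
    have ht : 0 < t := ht
    have : (v + t) ^ (H - 1) ≤ t ^ (H - 1) :=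
      rpow_le_rpow_of_nonpos ht (by linarith) (by linarith)
    rw [mul_comm]
    gcongr
  have hnn : 0 ≤ (∫ t in Set.Ioi (0:ℝ), Real.exp (-a * t) * (v + t) ^ (H - 1)) :=
    setIntegral_nonneg measurableSet_Ioi (fun t ht => by
      have : 0 < t := ht
      positivity)
  set A := ∫ t in Set.Ioi (0:ℝ), Real.exp (-a * t) * (v + t) ^ (H - 1)
  set B := ∫ t in Set.Ioi (0:ℝ), Real.exp (-a * t) * (v + t) ^ (H - 2)
  have : B - v ^ (H - 1) / (1 - H) = -(a / (1 - H) * A) := by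
    field_simp
    linarith
  rw [this, abs_neg, abs_of_nonneg (by positivity)]
  gcongr

lemma aux_I_s7 (a b H : ℝ) (ha : 0 < a) (hb : 0 < b) (hH : H ∈ Set.Ioo (0:ℝ) 1) :
    (fun s : ℝ => (∫ v in (0:ℝ)..s, Real.exp (b * v) *
        ∫ u in Set.Iic (0:ℝ), Real.exp (a * u) * (v - u) ^ (H - 2)) - s ^ H / (H * (1 - H)))
      =O[𝓝[>] (0:ℝ)] fun s : ℝ => s := by
  obtain ⟨K, hK0, hK⟩ := aux_J a H ha hH
  obtain ⟨h0, h1⟩ := hH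
  have h1H : 0 < 1 - H := by linarith
  set J : ℝ → ℝ := fun v => ∫ u in Set.Iic (0:ℝ), Real.exp (a * u) * (v - u) ^ (H - 2) with hJ
  have hJm : StronglyMeasurable J := by
    have : Measurable (fun p : ℝ × ℝ => Real.exp (a * p.2) * (p.1 - p.2) ^ (H - 2)) := by fun_prop
    exact this.stronglyMeasurable.integral_prod_right'
  set C := b * Real.exp b * (1 / (1 - H) + K) + K with hC
  have hbd : ∀ v : ℝ, 0 < v → v ≤ 1 →
      ‖Real.exp (b * v) * J v - v ^ (H - 1) / (1 - H)‖ ≤ C := by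
    intro v hv hv1
    have k := hK v hv
    change |J v - v ^ (H - 1) / (1 - H)| ≤ K at k
    have e : |Real.exp (b * v) - 1| ≤ b * Real.exp b * v := by
      have x1 : 1 ≤ Real.exp (b * v) := Real.one_le_exp (by positivity)
      have x2 : 1 - b * v ≤ Real.exp (-(b * v)) := by
        have := Real.add_one_le_exp (-(b * v)); linarith
      have x3 : Real.exp (b * v) * Real.exp (-(b * v)) = 1 := by
        rw [← Real.exp_add]; simp
      have x4 : Real.exp (b * v) ≤ Real.exp b := Real.exp_le_exp.2 (by nlinarith)
      rw [abs_of_nonneg (by linarith)]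
      have x5 : Real.exp (b * v) * (1 - b * v) ≤ 1 := by
        have := mul_le_mul_of_nonneg_left x2 (Real.exp_pos (b * v)).le
        linarith
      have x6 : b * v * Real.exp (b * v) ≤ b * v * Real.exp b := by gcongr
      nlinarith
    have j : v * |J v| ≤ 1 / (1 - H) + K := by
      have y1 : |J v| ≤ v ^ (H - 1) / (1 - H) + K := by
        have y2 : 0 ≤ v ^ (H - 1) / (1 - H) := by positivity
        have := abs_le.1 k
        exact abs_le.2 ⟨by linarith, by linarith⟩
      have y3 : v * v ^ (H - 1) ≤ 1 := by
        have : v * v ^ (H - 1) = v ^ H := by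
          rw [rpow_sub_one hv.ne']; field_simp
        rw [this]
        exact rpow_le_one hv.le hv1 h0.le
      calc v * |J v| ≤ v * (v ^ (H - 1) / (1 - H) + K) := by gcongr
        _ = (v * v ^ (H - 1)) / (1 - H) + v * K := by ring
        _ ≤ 1 / (1 - H) + 1 * K := by gcongr
        _ = _ := by ring
    have : Real.exp (b * v) * J v - v ^ (H - 1) / (1 - H)
        = (Real.exp (b * v) - 1) * J v + (J v - v ^ (H - 1) / (1 - H)) := by ring
    rw [this, norm_eq_abs]
    calc _ ≤ |(Real.exp (b * v) - 1) * J v| + |J v - v ^ (H - 1) / (1 - H)| := abs_add_le _ _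
      _ ≤ b * Real.exp b * v * |J v| + K := by rw [abs_mul]; gcongr
      _ = b * Real.exp b * (v * |J v|) + K := by ring
      _ ≤ C := by rw [hC]; gcongr
  refine IsBigO.of_bound C ?_
  filter_upwards [Ioc_mem_nhdsGT (zero_lt_one' ℝ)] with s hs
  obtain ⟨hs0, hs1⟩ := hs
  have hp : IntervalIntegrable (fun v : ℝ => v ^ (H - 1) / (1 - H)) volume 0 s :=
    (intervalIntegral.intervalIntegrable_rpow' (by linarith)).div_const _
  have hd : IntervalIntegrable (fun v : ℝ => Real.exp (b * v) * J v - v ^ (H - 1) / (1 - H))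
      volume 0 s := by
    rw [intervalIntegrable_iff, Set.uIoc_of_le hs0.le]
    refine Measure.integrableOn_of_bounded (M := C) (by simp) ?_ ?_
    · have := hJm.measurable
      exact (by fun_prop : Measurable
        (fun v : ℝ => Real.exp (b * v) * J v - v ^ (H - 1) / (1 - H))).aestronglyMeasurable
    · exact (ae_restrict_iff' measurableSet_Ioc).2
        (Eventually.of_forall fun v hv => hbd v hv.1 (hv.2.trans hs1))
  have hI : (∫ v in (0:ℝ)..s, v ^ (H - 1) / (1 - H)) = s ^ H / (H * (1 - H)) := by
    rw [intervalIntegral.integral_div, integral_rpow (Or.inl (by linarith))]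
    simp only [sub_add_cancel, zero_rpow h0.ne', sub_zero]
    rw [div_div]
  have hf : IntervalIntegrable (fun v : ℝ => Real.exp (b * v) * J v) volume 0 s := by
    simpa using hd.add hp
  rw [← hI, ← intervalIntegral.integral_sub hf hp]
  have := intervalIntegral.norm_integral_le_of_norm_le_const (a := 0) (b := s) (C := C)
    (f := fun v : ℝ => Real.exp (b * v) * J v - v ^ (H - 1) / (1 - H))
    (fun v hv => by
      rw [Set.uIoc_of_le hs0.le] at hv
      exact hbd v hv.1 (hv.2.trans hs1))
  simpa using this

lemma aux_exp_s7 (a : ℝ) :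
    (fun s : ℝ => Real.exp (-a * s) - 1) =O[𝓝[>] (0:ℝ)] fun s : ℝ => s := by
  have : HasDerivAt (fun s : ℝ => Real.exp (-a * s)) (Real.exp (-a * 0) * (-a * 1)) 0 :=
    ((hasDerivAt_id (0:ℝ)).const_mul (-a)).exp
  have := this.differentiableAt.isBigO_sub.mono (nhdsWithin_le_nhds (s := Set.Ioi 0))
  simpa using this

lemma aux_eI (a b H : ℝ) (ha : 0 < a) (hb : 0 < b) (hH : H ∈ Set.Ioo (0:ℝ) 1) :
    (fun s : ℝ => Real.exp (-b * s) * (∫ v in (0:ℝ)..s, Real.exp (b * v) *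
        ∫ u in Set.Iic (0:ℝ), Real.exp (a * u) * (v - u) ^ (H - 2)) - s ^ H / (H * (1 - H)))
      =O[𝓝[>] (0:ℝ)] fun s : ℝ => s := by
  have hI := aux_I_s7 a b H ha hb hH
  obtain ⟨h0, h1⟩ := hH
  have he1 : (fun s : ℝ => Real.exp (-b * s)) =O[𝓝[>] (0:ℝ)] fun _ : ℝ => (1:ℝ) := by
    have : Continuous (fun s : ℝ => Real.exp (-b * s)) := by fun_prop
    exact (this.tendsto 0).isBigO_one ℝ |>.mono nhdsWithin_le_nhds
  have hs1 : (fun s : ℝ => s ^ H / (H * (1 - H))) =O[𝓝[>] (0:ℝ)] fun _ : ℝ => (1:ℝ) := by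
    have : Continuous (fun s : ℝ => s ^ H / (H * (1 - H))) :=
      (continuous_id.rpow_const (fun _ => Or.inr h0.le)).div_const _
    exact (this.tendsto 0).isBigO_one ℝ |>.mono nhdsWithin_le_nhds
  have := (he1.mul hI).add (((aux_exp_s7 b).mul hs1).congr_right (g₂ := fun s => 1 * s)
    (fun s => by ring))
  refine this.congr (fun s => by ring) (fun s => by ring)

theorem stmt7
    (α1 α2 ν1 ν2 H ρ η : ℝ)
    (hα1 : 0 < α1) (hα2 : 0 < α2) (hν1 : 0 < ν1) (hν2 : 0 < ν2)
    (hH : H ∈ Set.Ioo (0:ℝ) 1)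
    (C0 : ℝ)
    (hC0 : C0 = Real.Gamma (H + 1) * ν1 * ν2 / (2 * (α1 + α2)) *
      ((α1 ^ (1 - H) + α2 ^ (1 - H)) * ρ + (α2 ^ (1 - H) - α1 ^ (1 - H)) * η))
    (I12 I21 : ℝ → ℝ)
    (hI12 : ∀ s, I12 s =
      ∫ v in (0:ℝ)..s, Real.exp (α2 * v) *
        ∫ u in Set.Iic (0:ℝ), Real.exp (α1 * u) * (v - u) ^ (H - 2))
    (hI21 : ∀ s, I21 s =
      ∫ v in (0:ℝ)..s, Real.exp (α1 * v) *
        ∫ u in Set.Iic (0:ℝ), Real.exp (α2 * u) * (v - u) ^ (H - 2))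
    (r12 r21 : ℝ → ℝ)
    (hr12 : ∀ s, r12 s = Real.exp (-α2 * s) * C0 +
      ν1 * ν2 * Real.exp (-α2 * s) * (H * (H - 1)) * ((ρ - η) / 2) * I12 s)
    (hr21 : ∀ s, r21 s = Real.exp (-α1 * s) * C0 +
      ν1 * ν2 * Real.exp (-α1 * s) * (H * (H - 1)) * ((ρ + η) / 2) * I21 s) :
    (fun s : ℝ => (r12 s - r21 s) / (ν1 * ν2 * s ^ H) - η)
      =O[𝓝[>] (0:ℝ)] fun s : ℝ => s ^ (1 - H) := by
  have h12 := aux_eI α1 α2 H hα1 hα2 hH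
  have h21 := aux_eI α2 α1 H hα2 hα1 hH
  simp only [← hI12] at h12
  simp only [← hI21] at h21
  obtain ⟨h0, h1⟩ := hH
  have h1H : 1 - H ≠ 0 := by linarith
  have key := ((((aux_exp_s7 α2).sub (aux_exp_s7 α1)).const_mul_left (C0 / (ν1 * ν2))).add
    (h12.const_mul_left (H * (H - 1) * ((ρ - η) / 2)))).sub
    (h21.const_mul_left (H * (H - 1) * ((ρ + η) / 2)))
  have key2 := key.mul (isBigO_refl (fun s : ℝ => (s ^ H)⁻¹) (𝓝[>] (0:ℝ)))
  refine key2.congr' ?_ ?_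
  · filter_upwards [self_mem_nhdsWithin] with s hs
    have hs : 0 < s := hs
    have hp : 0 < s ^ H := rpow_pos_of_pos hs H
    rw [hr12, hr21]
    generalize s ^ H = p at hp
    field_simp
    ring
  · filter_upwards [self_mem_nhdsWithin] with s hs
    have hs : 0 < s := hs
    rw [rpow_sub hs, rpow_one, div_eq_mul_inv]
end
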